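/- arXiv:1505.00990 — 4 statements merged into one kernel-verified Lean document; each statement's English description precedes it below -/
import Mathlib

section
/- Let S ⊂ ℝ² be a compact set contained in [0,∞) × ℝ with Lebesgue measure μ(S) < 1. Then there exist a, b > 0 such that L := 1/(ab) is a prime natural number, and a set Λ = {(k_j, l_j)}_{j=0}^{L-1} ⊆ ℤ² of at most L lattice points, such that S ⊆ ⋃_{j=0}^{L-1} ([a k_j, a(k_j+1)) × [b l_j, b(l_j+1))), and moreover S ⊆ [0, 1/b] × [−1/(2a), 1/(2a)]. -/
/-!
Since `S` is compact, the measures of its closed `δ`-thickenings tend to `volume S` as `δ → 0`, so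
some thickening still has measure less than one. Take `a = b = 1 / √L` for a large prime `L`: once
`a ≤ δ`, each cell of the grid `a ℤ × a ℤ` that meets `S` lies in this thickening. The cells are
disjoint and have area `1 / L`, so fewer than `L` of them meet `S` (`card_lt_of_cells_meet`).
If moreover `√L` is at least twice a bound on the coordinates of points of `S`, then `S` lies in
the required rectangle.
-/

open MeasureTheory Set

/-- The half-open square of side `a` with lower left corner `(a k, a l)`, where `p = (k, l)`. -/
def gridCell (a : ℝ) (p : ℤ × ℤ) : Set (ℝ × ℝ) :=
  Set.Ico (a * (p.1 : ℝ)) (a * ((p.1 : ℝ) + 1)) ×ˢ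
    Set.Ico (a * (p.2 : ℝ)) (a * ((p.2 : ℝ) + 1))

lemma mem_Ico_mul_iff_floor {a : ℝ} (ha : 0 < a) (k : ℤ) (x : ℝ) :
    x ∈ Set.Ico (a * (k : ℝ)) (a * ((k : ℝ) + 1)) ↔ ⌊x / a⌋ = k := by
  rw [Int.floor_eq_iff, le_div_iff₀ ha, div_lt_iff₀ ha, Set.mem_Ico, mul_comm a, mul_comm a]

lemma mem_gridCell_iff {a : ℝ} (ha : 0 < a) (p : ℤ × ℤ) (x : ℝ × ℝ) :
    x ∈ gridCell a p ↔ (⌊x.1 / a⌋, ⌊x.2 / a⌋) = p := by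
  rw [gridCell, Set.mem_prod, mem_Ico_mul_iff_floor ha, mem_Ico_mul_iff_floor ha, Prod.ext_iff]

lemma volume_gridCell (a : ℝ) (p : ℤ × ℤ) :
    volume (gridCell a p) = ENNReal.ofReal a * ENNReal.ofReal a := by
  rw [gridCell, Measure.volume_eq_prod, Measure.prod_prod, Real.volume_Ico, Real.volume_Ico]
  congr 2 <;> ring

lemma measurableSet_gridCell (a : ℝ) (p : ℤ × ℤ) : MeasurableSet (gridCell a p) :=
  measurableSet_Ico.prod measurableSet_Ico

lemma gridCell_subset_cthickening {a δ : ℝ} (haδ : a ≤ δ) {S : Set (ℝ × ℝ)}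
    {p : ℤ × ℤ} (hp : (gridCell a p ∩ S).Nonempty) :
    gridCell a p ⊆ Metric.cthickening δ S := by
  obtain ⟨y, ⟨⟨hy1, hy1'⟩, hy2, hy2'⟩, hyS⟩ := hp
  rintro x ⟨⟨hx1, hx1'⟩, hx2, hx2'⟩
  refine Metric.mem_cthickening_of_dist_le x y δ S hyS ?_
  rw [Prod.dist_eq, Real.dist_eq, Real.dist_eq]
  refine max_le (abs_le.2 ⟨?_, ?_⟩) (abs_le.2 ⟨?_, ?_⟩) <;> linarith

/-- Comparing areas: cells of area `1 / L` that meet `S` are disjoint subsets of a thickening of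
measure less than one. -/
lemma card_lt_of_cells_meet {a δ : ℝ} (ha : 0 < a) (haδ : a ≤ δ) {L : ℕ}
    (haL : a * a * (L : ℝ) = 1) {S : Set (ℝ × ℝ)}
    (hμ : volume (Metric.cthickening δ S) < 1) (T : Finset (ℤ × ℤ))
    (hT : ∀ p ∈ T, (gridCell a p ∩ S).Nonempty) : T.card < L := by
  have hdisj : (T : Set (ℤ × ℤ)).PairwiseDisjoint (gridCell a) := by
    intro p _ q _ hpq
    refine Set.disjoint_left.2 fun x hxp hxq => hpq ?_
    rw [← (mem_gridCell_iff ha p x).1 hxp, (mem_gridCell_iff ha q x).1 hxq]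
  have hsum : volume (⋃ p ∈ T, gridCell a p) = (T.card : ENNReal) * ENNReal.ofReal (a * a) := by
    rw [measure_biUnion_finset hdisj fun p _ => measurableSet_gridCell a p]
    simp [volume_gridCell, ENNReal.ofReal_mul ha.le]
  have hlt : (T.card : ENNReal) * ENNReal.ofReal (a * a) < 1 := by
    rw [← hsum]
    exact (measure_mono (Set.iUnion₂_subset fun p hp =>
      gridCell_subset_cthickening haδ (hT p hp))).trans_lt hμ
  rw [← ENNReal.ofReal_natCast, ← ENNReal.ofReal_mul (Nat.cast_nonneg _),
    ENNReal.ofReal_lt_one, ← haL, mul_comm] at hlt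
  exact_mod_cast lt_of_mul_lt_mul_left hlt (by positivity)

/-- **Rectification of compact sets of measure less than one.**
For any compact set `S ⊆ [0,∞) × ℝ` of Lebesgue measure less than one, there exist
`a, b > 0` with `L = 1/(a*b)` a prime natural number, and a set `Λ ⊆ ℤ²` of at most `L`
lattice points, such that `S` is covered by the translates `[a k, a(k+1)) × [b l, b(l+1))`,
`(k,l) ∈ Λ`, of the rectangle `[0,a) × [0,b)`, and moreover
`S ⊆ [0, 1/b] × [−1/(2a), 1/(2a)]`. -/
theorem rectification_of_compact_small_measure
    (S : Set (ℝ × ℝ)) (hS : IsCompact S)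
    (hpos : S ⊆ Set.Ici (0 : ℝ) ×ˢ (Set.univ : Set ℝ))
    (hμ : volume S < 1) :
    ∃ (a b : ℝ) (L : ℕ) (Λ : Finset (ℤ × ℤ)),
      0 < a ∧ 0 < b ∧ Nat.Prime L ∧ a * b * (L : ℝ) = 1 ∧ Λ.card ≤ L ∧
      S ⊆ ⋃ p ∈ Λ, (Set.Ico (a * (p.1 : ℝ)) (a * ((p.1 : ℝ) + 1)) ×ˢ
        Set.Ico (b * (p.2 : ℝ)) (b * ((p.2 : ℝ) + 1))) ∧
      S ⊆ Set.Icc (0 : ℝ) (1 / b) ×ˢ Set.Icc (-(1 / (2 * a))) (1 / (2 * a)) := by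
  obtain ⟨δ, hδμ, hδ⟩ : ∃ δ : ℝ, volume (Metric.cthickening δ S) < 1 ∧ 0 < δ := by
    have h := (tendsto_measure_cthickening_of_isCompact (μ := volume) hS).eventually_lt_const hμ
    exact ((h.filter_mono nhdsWithin_le_nhds).and
      (self_mem_nhdsWithin : Set.Ioi (0 : ℝ) ∈ nhdsWithin 0 (Set.Ioi 0))).exists
  obtain ⟨R, hR⟩ := hS.isBounded.exists_norm_le
  -- `M` bounds `1 / δ` and `2 R`, so that a side `a ≤ 1 / M` is small enough for both purposes.
  set M : ℝ := max (1 / δ) (2 * R)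
  have hM : 0 < M := lt_max_of_lt_left (by positivity)
  obtain ⟨L, hLM, hL⟩ := Nat.exists_infinite_primes ⌈M ^ 2⌉₊
  have hL0 : (0 : ℝ) < L := by exact_mod_cast hL.pos
  have hsqrt : M ≤ √(L : ℝ) := Real.le_sqrt_of_sq_le (Nat.ceil_le.1 hLM)
  have hs0 : 0 < √(L : ℝ) := Real.sqrt_pos.2 hL0
  obtain ⟨a, ha_def⟩ : ∃ a : ℝ, a = 1 / √(L : ℝ) := ⟨_, rfl⟩
  have ha : 0 < a := by rw [ha_def]; positivity
  have hinv : 1 / a = √(L : ℝ) := by rw [ha_def, one_div_one_div]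
  have haL : a * a * (L : ℝ) = 1 := by
    rw [ha_def, div_mul_div_comm, Real.mul_self_sqrt hL0.le]
    field_simp
  have haδ : a ≤ δ := by
    rw [ha_def, one_div_le hs0 hδ]
    exact (le_max_left _ _).trans hsqrt
  have hcard := card_lt_of_cells_meet ha haδ haL hδμ
  have hfin : {p : ℤ × ℤ | (gridCell a p ∩ S).Nonempty}.Finite := by
    by_contra hinf
    obtain ⟨T, hT, hTL⟩ := Set.Infinite.exists_subset_card_eq hinf L
    exact (hcard T fun p hp => hT hp).ne hTL
  refine ⟨a, a, L, hfin.toFinset, ha, ha, hL, haL,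
    (hcard _ fun p hp => hfin.mem_toFinset.1 hp).le, fun x hx => ?_, fun x hx => ?_⟩
  · have hxp : x ∈ gridCell a (⌊x.1 / a⌋, ⌊x.2 / a⌋) := (mem_gridCell_iff ha _ x).2 rfl
    exact Set.mem_biUnion (hfin.mem_toFinset.2 ⟨x, hxp, hx⟩) hxp
  · have h2R : 2 * R ≤ √(L : ℝ) := (le_max_right _ _).trans hsqrt
    have hhalf : 1 / (2 * a) = √(L : ℝ) / 2 := by rw [← hinv]; field_simp
    have hx1 : |x.1| ≤ R := (norm_fst_le x).trans (hR x hx)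
    have hx2 : |x.2| ≤ R := (norm_snd_le x).trans (hR x hx)
    rw [hhalf, hinv]
    rw [abs_le] at hx1 hx2
    exact ⟨⟨(hpos hx).1, by linarith⟩, by linarith, by linarith⟩
end

section
/- Let H be a complex Hilbert space and fix a nonzero window g ∈ 𝓢(ℝ²). Let η : 𝓢(ℝ²) → H be a linear map such that (a) there is C₁ > 0 with ‖η(φ)‖_H ≤ C₁ · ‖φ‖_{M¹} for all φ ∈ 𝓢(ℝ²), and (b) there is a compact set K ⊆ ℝ² such that η(φ) = 0 whenever φ ∈ 𝓢(ℝ²) vanishes on a neighborhood of K. Fix ψ ∈ C_c^∞(ℝ²) with ∑_{n∈ℤ²} ψ(· − n) ≡ 1. Then there is a constant C₂ > 0 (depending on C₁, K, ψ, g) such that for all φ ∈ 𝓢(ℝ²): ‖η(φ)‖_H ≤ C₂ · sup_{n∈ℤ²} ‖𝓕(φ · ψ(· − n))‖_{L¹(ℝ²)}. In particular, η extends to a bounded linear operator from the Wiener amalgam space W(A, ℓ∞) to H. -/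
/-!
Let `ψ_n = ψ(· - n)`. Only finitely many `ψ_n` meet a ball containing `K`, and on that ball their
sum is `1`; by the support condition `η φ` is the finite sum of the `η (φ ψ_n)` over these `n`.
It therefore suffices to bound `‖u‖_{M¹}` by `‖𝓕u‖_{L¹}` for `u = φ ψ_n`, uniformly in `φ`.

These `u` satisfy `u = u θ` for one fixed smooth cutoff `θ`, so at each `t` the short-time Fourier
transform is `V_g u(t, ·) = 𝓕(u · h_t)` with `h_t = θ · conj g(· - t)`. Fourier inversion for `u`
makes this the convolution of `𝓕u` and `𝓕h_t` (`ft_mul`), whence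
`‖V_g u(t, ·)‖_{L¹} ≤ ‖𝓕u‖_{L¹} ‖𝓕h_t‖_{L¹}` (`fourierL1_mul_le`). Finally `‖𝓕h_t‖_{L¹}` is
integrable in `t` (`fourierL1_decay`): writing `t = x - (x - t)`, the factor
`(1 + t₁²)(1 + t₂²)` is distributed over `θ` and `g`, and the same product inequality bounds the
result uniformly in `t`. The product inequality also shows that the supremum over `n` is over a
bounded family, so that the real-valued `⨆` is a true supremum.
-/

open MeasureTheory Complex Real

noncomputable section

/-- The `L¹` norm of the Fourier transform of `u : ℝ² → ℂ`,
`‖𝓕u‖_{L¹} = ∫ |∫ u(x) e^{−2πi ξ·x} dx| dξ`. -/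
def fourierL1 (u : ℝ × ℝ → ℂ) : ℝ :=
  ∫ ξ : ℝ × ℝ, ‖∫ x : ℝ × ℝ,
    u x * Complex.exp (-(2 * Real.pi * (ξ.1 * x.1 + ξ.2 * x.2) : ℝ) * Complex.I)‖

/-- The modulation space norm `‖φ‖_{M¹} = ∫∫ |V_g φ(t,ν)| dt dν` on `ℝ²` with window `g`. -/
def M1Norm2 (g φ : ℝ × ℝ → ℂ) : ℝ :=
  ∫ p : (ℝ × ℝ) × (ℝ × ℝ), ‖∫ x : ℝ × ℝ,
    φ x * (starRingEnd ℂ) (g (x - p.1)) *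
      Complex.exp (-(2 * Real.pi * (p.2.1 * x.1 + p.2.2 * x.2) : ℝ) * Complex.I)‖

/-! ### The Fourier transform on the plane -/

/-- The character `x ↦ exp(-2πi ξ·x)` of `ℝ²`. -/
def chr (ξ x : ℝ × ℝ) : ℂ :=
  Complex.exp (-(2 * Real.pi * (ξ.1 * x.1 + ξ.2 * x.2) : ℝ) * Complex.I)

/-- The Fourier transform on `ℝ × ℝ` (which Mathlib equips with the sup norm, so that its
inner-product Fourier transform does not apply directly). -/
def ft (u : ℝ × ℝ → ℂ) (ξ : ℝ × ℝ) : ℂ := ∫ x : ℝ × ℝ, u x * chr ξ x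

lemma fourierL1_eq (u : ℝ × ℝ → ℂ) : fourierL1 u = ∫ ξ, ‖ft u ξ‖ := rfl

lemma fourierL1_nonneg (u : ℝ × ℝ → ℂ) : 0 ≤ fourierL1 u :=
  integral_nonneg fun _ => norm_nonneg _

lemma norm_chr (ξ x : ℝ × ℝ) : ‖chr ξ x‖ = 1 := by
  unfold chr
  rw [← Complex.ofReal_neg, Complex.norm_exp_ofReal_mul_I]

lemma chr_mul (ξ x y : ℝ × ℝ) : chr ξ (x + y) = chr ξ x * chr ξ y := by
  unfold chr
  rw [← Complex.exp_add]
  congr 1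
  simp only [Prod.fst_add, Prod.snd_add]
  push_cast
  ring

lemma chr_sub (ξ η x : ℝ × ℝ) : chr (ξ - η) x = chr η (-x) * chr ξ x := by
  unfold chr
  rw [← Complex.exp_add]
  congr 1
  simp only [Prod.fst_sub, Prod.snd_sub, Prod.fst_neg, Prod.snd_neg]
  push_cast
  ring

@[fun_prop]
lemma continuous_chr : Continuous fun p : (ℝ × ℝ) × (ℝ × ℝ) => chr p.1 p.2 := by
  unfold chr
  fun_prop

lemma integrable_mul_chr {u : ℝ × ℝ → ℂ} (hu : Integrable u) (ξ : ℝ × ℝ) :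
    Integrable fun x => u x * chr ξ x := by
  refine hu.mul_bdd (c := 1) ?_ ?_
  · exact (continuous_chr.comp (Continuous.prodMk_right ξ)).aestronglyMeasurable
  · exact Filter.Eventually.of_forall fun x => (norm_chr ξ x).le

/-- A Schwartz function on `ℝ × ℝ`, viewed on the Euclidean plane `WithLp 2 (ℝ × ℝ)`. -/
def toEuc (u : SchwartzMap (ℝ × ℝ) ℂ) : SchwartzMap (WithLp 2 (ℝ × ℝ)) ℂ :=
  SchwartzMap.compCLMOfContinuousLinearEquiv ℂ (WithLp.prodContinuousLinearEquiv 2 ℝ ℝ ℝ) u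

lemma toEuc_apply (u : SchwartzMap (ℝ × ℝ) ℂ) (x : WithLp 2 (ℝ × ℝ)) :
    toEuc u x = u (WithLp.ofLp x) := rfl

lemma integral_ofLp (f : ℝ × ℝ → ℂ) :
    ∫ x : WithLp 2 (ℝ × ℝ), f (WithLp.ofLp x) = ∫ x, f x :=
  (WithLp.volume_preserving_ofLp ℝ ℝ).integral_comp
    (MeasurableEquiv.toLp 2 (ℝ × ℝ)).symm.measurableEmbedding f

lemma fourier_toEuc (u : SchwartzMap (ℝ × ℝ) ℂ) (ξ : WithLp 2 (ℝ × ℝ)) :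
    FourierTransform.fourier (toEuc u) ξ = ft u (WithLp.ofLp ξ) := by
  rw [SchwartzMap.fourier_coe, Real.fourier_eq']
  unfold ft
  rw [← integral_ofLp]
  congr 1
  ext x
  rw [toEuc_apply, smul_eq_mul, mul_comm]
  congr 1
  unfold chr
  congr 2
  simp [WithLp.prod_inner_apply]

lemma ft_continuous (u : SchwartzMap (ℝ × ℝ) ℂ) : Continuous (ft u) := by
  have h : ft u = fun ξ => FourierTransform.fourier (toEuc u) (WithLp.toLp 2 ξ) := by
    ext ξ
    rw [fourier_toEuc]
  rw [h]
  exact (SchwartzMap.continuous _).comp (WithLp.prod_continuous_toLp 2 ℝ ℝ)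

lemma ft_integrable (u : SchwartzMap (ℝ × ℝ) ℂ) : Integrable (ft u) := by
  have h : ft u = fun ξ => FourierTransform.fourier (toEuc u) (WithLp.toLp 2 ξ) := by
    ext ξ
    rw [fourier_toEuc]
  rw [h]
  exact (WithLp.volume_preserving_toLp ℝ ℝ).integrable_comp_of_integrable
    (SchwartzMap.integrable _)

/-- Fourier inversion on `ℝ × ℝ` for Schwartz functions. -/
lemma ft_inversion (u : SchwartzMap (ℝ × ℝ) ℂ) (x : ℝ × ℝ) :
    u x = ∫ ξ, ft u ξ * chr ξ (-x) := by
  have h : FourierTransformInv.fourierInv (FourierTransform.fourier (toEuc u)) (WithLp.toLp 2 x)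
      = toEuc u (WithLp.toLp 2 x) := by
    rw [FourierTransform.fourierInv_fourier_eq]
  rw [toEuc_apply, SchwartzMap.fourierInv_coe, Real.fourierInv_eq'] at h
  rw [← h, ← integral_ofLp]
  congr 1
  ext ξ
  rw [fourier_toEuc, smul_eq_mul, mul_comm]
  congr 1
  unfold chr
  congr 2
  simp [WithLp.prod_inner_apply]
  ring

/-- The Fourier transform of a product is the convolution of the Fourier transforms. -/
lemma ft_mul (u h : SchwartzMap (ℝ × ℝ) ℂ) (ν : ℝ × ℝ) :
    ft (fun x => u x * h x) ν = ∫ ξ, ft u ξ * ft h (ν - ξ) := by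
  have hint : Integrable (fun p : (ℝ × ℝ) × (ℝ × ℝ) =>
      (h p.1 * ft u p.2) * (chr p.2 (-p.1) * chr ν p.1)) := by
    refine (Integrable.mul_prod h.integrable (ft_integrable u)).mul_bdd (c := 1) ?_ ?_
    · unfold chr
      exact Continuous.aestronglyMeasurable (by fun_prop)
    · exact Filter.Eventually.of_forall fun p => by simp [norm_chr]
  calc ft (fun x => u x * h x) ν
      = ∫ x, ∫ ξ, (h x * ft u ξ) * (chr ξ (-x) * chr ν x) := by
        unfold ft
        congr 1
        ext x
        change u x * h x * chr ν x = _
        rw [ft_inversion u x, ← integral_mul_const, ← integral_mul_const]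
        congr 1
        ext ξ
        unfold ft
        ring
    _ = ∫ ξ, ∫ x, (h x * ft u ξ) * (chr ξ (-x) * chr ν x) := integral_integral_swap hint
    _ = ∫ ξ, ft u ξ * ft h (ν - ξ) := by
        congr 1
        ext ξ
        rw [show ft h (ν - ξ) = ∫ x, h x * chr (ν - ξ) x from rfl, ← integral_const_mul]
        congr 1
        ext x
        rw [chr_sub]
        ring

/-! ### The algebra property of `𝓕L¹` -/

/-- The product of two Schwartz functions. -/
def mulS (u h : SchwartzMap (ℝ × ℝ) ℂ) : SchwartzMap (ℝ × ℝ) ℂ :=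
  SchwartzMap.pairing (ContinuousLinearMap.mul ℂ ℂ) u h

lemma mulS_apply (u h : SchwartzMap (ℝ × ℝ) ℂ) (x : ℝ × ℝ) : mulS u h x = u x * h x := rfl

/-- `𝓕L¹` is a Banach algebra: Young's inequality on the Fourier side. -/
lemma fourierL1_mul_le (u h : SchwartzMap (ℝ × ℝ) ℂ) :
    fourierL1 (fun x => u x * h x) ≤ fourierL1 u * fourierL1 h := by
  have hu := (ft_integrable u).norm
  have hh := (ft_integrable h).norm
  have hconv := integral_convolution (ContinuousLinearMap.mul ℝ ℝ) hu hh
  have hci := hu.integrable_convolution (ContinuousLinearMap.mul ℝ ℝ) hh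
  rw [fourierL1_eq, fourierL1_eq, fourierL1_eq]
  rw [ContinuousLinearMap.mul_apply'] at hconv
  rw [← hconv]
  refine integral_mono_of_nonneg (Filter.Eventually.of_forall fun _ => norm_nonneg _) hci
    (Filter.Eventually.of_forall fun ν => ?_)
  simp only [ft_mul]
  refine (norm_integral_le_integral_norm _).trans (le_of_eq ?_)
  simp [convolution_def]

lemma ft_translate (u : ℝ × ℝ → ℂ) (t ξ : ℝ × ℝ) :
    ft (fun x => u (x - t)) ξ = chr ξ t * ft u ξ := by
  unfold ft
  rw [← integral_sub_right_eq_self (fun x => u x * chr ξ x) t, ← integral_const_mul]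
  congr 1
  ext x
  have h : chr ξ x = chr ξ t * chr ξ (x - t) := by
    rw [← chr_mul, add_sub_cancel]
  change u (x - t) * chr ξ x = _
  rw [h]
  ring

lemma fourierL1_translate (u : ℝ × ℝ → ℂ) (t : ℝ × ℝ) :
    fourierL1 (fun x => u (x - t)) = fourierL1 u := by
  simp only [fourierL1_eq, ft_translate, norm_mul, norm_chr, one_mul]

/-! ### Decay of the localized window and the `M¹` bound -/

/-- The factors depending on `x` in `1 + (x - y)² = ∑ i, wtA i x * wtB i y`. -/
def wtA (i : Fin 3) (x : ℝ) : ℝ := ![1 + x ^ 2, -2 * x, 1] i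

/-- The factors depending on `y` in `1 + (x - y)² = ∑ i, wtA i x * wtB i y`. -/
def wtB (i : Fin 3) (y : ℝ) : ℝ := ![1, y, y ^ 2] i

lemma sum_wt (x y : ℝ) : ∑ i, wtA i x * wtB i y = 1 + (x - y) ^ 2 := by
  simp [Fin.sum_univ_three, wtA, wtB]
  ring

lemma wtA_temperate (i : Fin 3) : (wtA i).HasTemperateGrowth := by
  fin_cases i
  · change Function.HasTemperateGrowth fun x : ℝ => 1 + x ^ 2
    fun_prop
  · change Function.HasTemperateGrowth fun x : ℝ => -2 * x
    fun_prop
  · change Function.HasTemperateGrowth fun x : ℝ => (1 : ℝ)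
    fun_prop

lemma wtB_temperate (i : Fin 3) : (wtB i).HasTemperateGrowth := by
  fin_cases i
  · change Function.HasTemperateGrowth fun x : ℝ => (1 : ℝ)
    fun_prop
  · change Function.HasTemperateGrowth fun x : ℝ => x
    fun_prop
  · change Function.HasTemperateGrowth fun x : ℝ => x ^ 2
    fun_prop

lemma exists_weighted {a b : ℝ → ℝ} (ha : a.HasTemperateGrowth) (hb : b.HasTemperateGrowth)
    (u : SchwartzMap (ℝ × ℝ) ℂ) :
    ∃ v : SchwartzMap (ℝ × ℝ) ℂ, ∀ x, v x = (a x.1 * b x.2 : ℝ) * u x := by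
  have h1 : Function.HasTemperateGrowth fun x : ℝ × ℝ => a x.1 :=
    ha.comp (ContinuousLinearMap.fst ℝ ℝ ℝ).hasTemperateGrowth
  have h2 : Function.HasTemperateGrowth fun x : ℝ × ℝ => b x.2 :=
    hb.comp (ContinuousLinearMap.snd ℝ ℝ ℝ).hasTemperateGrowth
  have h3 : Function.HasTemperateGrowth fun x : ℝ × ℝ => ((a x.1 * b x.2 : ℝ) : ℂ) :=
    Function.HasTemperateGrowth.comp Function.Complex.hasTemperateGrowth_ofReal (h1.mul h2)
  exact ⟨SchwartzMap.smulLeftCLM ℂ (fun x : ℝ × ℝ => ((a x.1 * b x.2 : ℝ) : ℂ)) u,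
    fun x => by rw [SchwartzMap.smulLeftCLM_apply_apply h3, smul_eq_mul]⟩

/-- Decay of the `𝓕L¹` norm of `θ · T_t γ` as `t → ∞`. With `y = x - t`, the weight
`(1 + t₁²)(1 + t₂²)` is a sum of products of polynomials in `x` and in `y`, which are absorbed
into `θ` and `γ`; each term is then bounded uniformly in `t` by the algebra property. -/
lemma fourierL1_decay (θ γ : SchwartzMap (ℝ × ℝ) ℂ) :
    ∃ C : ℝ, ∀ t : ℝ × ℝ, fourierL1 (fun x => θ x * γ (x - t)) ≤
      C * ((1 + t.1 ^ 2)⁻¹ * (1 + t.2 ^ 2)⁻¹) := by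
  choose A hA using fun p : Fin 3 × Fin 3 =>
    exists_weighted (wtA_temperate p.1) (wtA_temperate p.2) θ
  choose B hB using fun p : Fin 3 × Fin 3 =>
    exists_weighted (wtB_temperate p.1) (wtB_temperate p.2) γ
  refine ⟨∑ p, fourierL1 (A p) * fourierL1 (B p), fun t => ?_⟩
  have hW : 0 < (1 + t.1 ^ 2) * (1 + t.2 ^ 2) := by positivity
  rw [← mul_inv, ← div_eq_mul_inv, le_div_iff₀ hW]
  let Bt : Fin 3 × Fin 3 → SchwartzMap (ℝ × ℝ) ℂ := fun p =>
    SchwartzMap.compSubConstCLM ℂ t (B p)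
  have hBt : ∀ p x, Bt p x = B p (x - t) := fun p x => rfl
  have hsum : ∀ ξ, ((((1 + t.1 ^ 2) * (1 + t.2 ^ 2) : ℝ)) : ℂ) * ft (fun x => θ x * γ (x - t)) ξ
      = ∑ p, ft (mulS (A p) (Bt p)) ξ := by
    intro ξ
    unfold ft
    rw [← integral_const_mul, ← integral_finsetSum]
    · congr 1
      ext x
      have h1 := sum_wt x.1 (x.1 - t.1)
      have h2 := sum_wt x.2 (x.2 - t.2)
      rw [sub_sub_cancel] at h1 h2
      rw [← h1, ← h2, Finset.sum_mul_sum, ← Finset.sum_product', Finset.univ_product_univ]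
      push_cast
      rw [Finset.sum_mul]
      refine Finset.sum_congr rfl fun p _ => ?_
      rw [mulS_apply, hBt, hA, hB]
      push_cast
      simp only [Prod.fst_sub, Prod.snd_sub]
      ring
    · intro p _
      exact integrable_mul_chr (SchwartzMap.integrable _) ξ
  calc fourierL1 (fun x => θ x * γ (x - t)) * ((1 + t.1 ^ 2) * (1 + t.2 ^ 2))
      = ∫ ξ, ‖∑ p, ft (mulS (A p) (Bt p)) ξ‖ := by
        rw [fourierL1_eq, mul_comm, ← integral_const_mul]
        congr 1
        ext ξ
        rw [← hsum, norm_mul, Complex.norm_real, Real.norm_of_nonneg hW.le]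
    _ ≤ ∫ ξ, ∑ p, ‖ft (mulS (A p) (Bt p)) ξ‖ := by
        refine integral_mono_of_nonneg (Filter.Eventually.of_forall fun _ => norm_nonneg _) ?_
          (Filter.Eventually.of_forall fun ξ => norm_sum_le _ _)
        exact integrable_finsetSum _ fun p _ => (ft_integrable _).norm
    _ = ∑ p, fourierL1 (mulS (A p) (Bt p)) := by
        rw [integral_finsetSum _ fun p _ => (ft_integrable _).norm]
        rfl
    _ ≤ ∑ p, fourierL1 (A p) * fourierL1 (B p) := by
        refine Finset.sum_le_sum fun p _ => ?_
        rw [← fourierL1_translate (B p) t]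
        exact fourierL1_mul_le (A p) (Bt p)

/-- For functions `u` localized by a fixed Schwartz cutoff `θ` (in the sense `u = u θ`), the
`M¹` norm is dominated by the `𝓕L¹` norm. -/
lemma M1Norm2_le (g θ : SchwartzMap (ℝ × ℝ) ℂ) :
    ∃ D : ℝ, 0 ≤ D ∧ ∀ u : SchwartzMap (ℝ × ℝ) ℂ, (∀ x, u x = u x * θ x) →
      M1Norm2 g u ≤ D * fourierL1 u := by
  let γ : SchwartzMap (ℝ × ℝ) ℂ := SchwartzMap.postcompCLM (𝕜 := ℝ)
    (Complex.conjCLE : ℂ →L[ℝ] ℂ) g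
  have hγ : ∀ x, γ x = (starRingEnd ℂ) (g x) := fun x => by
    simp [γ, SchwartzMap.postcompCLM_apply]
  obtain ⟨C, hC⟩ := fourierL1_decay θ γ
  have hC0 : 0 ≤ C := by
    have := (fourierL1_nonneg _).trans (hC 0)
    simpa using this
  have hwint : Integrable fun t : ℝ × ℝ => (1 + t.1 ^ 2)⁻¹ * (1 + t.2 ^ 2)⁻¹ :=
    Integrable.mul_prod integrable_inv_one_add_sq integrable_inv_one_add_sq
  refine ⟨C * ∫ t : ℝ × ℝ, (1 + t.1 ^ 2)⁻¹ * (1 + t.2 ^ 2)⁻¹, ?_, fun u hu => ?_⟩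
  · exact mul_nonneg hC0 (integral_nonneg fun t => by positivity)
  have hM : M1Norm2 g u = ∫ p : (ℝ × ℝ) × (ℝ × ℝ),
      ‖ft (fun x => u x * (starRingEnd ℂ) (g (x - p.1))) p.2‖ := rfl
  have hnn : 0 ≤ (C * ∫ t : ℝ × ℝ, (1 + t.1 ^ 2)⁻¹ * (1 + t.2 ^ 2)⁻¹) * fourierL1 u :=
    mul_nonneg (mul_nonneg hC0 (integral_nonneg fun t => by positivity)) (fourierL1_nonneg _)
  by_cases hint : Integrable (fun p : (ℝ × ℝ) × (ℝ × ℝ) =>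
      ‖ft (fun x => u x * (starRingEnd ℂ) (g (x - p.1))) p.2‖)
  swap
  -- Without integrability the left-hand side is the junk value `0`.
  · rw [hM, integral_undef hint]
    exact hnn
  rw [hM]
  rw [Measure.volume_eq_prod] at hint ⊢
  rw [integral_prod _ hint, ← integral_const_mul, ← integral_mul_const]
  refine integral_mono_of_nonneg
    (Filter.Eventually.of_forall fun t => integral_nonneg fun _ => norm_nonneg _)
    ((hwint.const_mul C).mul_const _) (Filter.Eventually.of_forall fun t => ?_)
  let ht : SchwartzMap (ℝ × ℝ) ℂ := mulS θ (SchwartzMap.compSubConstCLM ℂ t γ)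
  have hht : ∀ x, ht x = θ x * γ (x - t) := fun x => rfl
  have e1 : (fun x => u x * (starRingEnd ℂ) (g (x - t))) = fun x => u x * ht x := by
    ext x
    rw [hht, hγ, ← mul_assoc, ← hu]
  change fourierL1 (fun x => u x * (starRingEnd ℂ) (g (x - t))) ≤ _
  rw [e1]
  refine (fourierL1_mul_le u ht).trans ?_
  rw [mul_comm]
  exact mul_le_mul_of_nonneg_right (hC t) (fourierL1_nonneg _)

/-! ### Localization by the partition of unity -/

/-- **Extension of compactly supported stochastic spreading functions to `W(A, ℓ∞)`.**
If a linear map `η : 𝓢(ℝ²) → H` into a Hilbert space is bounded with respect to the `M¹`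
norm and is supported in a compact set `K` (it annihilates every Schwartz function vanishing
on a neighborhood of `K`), then for any smooth compactly supported `ψ` generating a
partition of unity, `‖η(φ)‖ ≤ C₂ · sup_{n∈ℤ²} ‖𝓕(φ·ψ(·−n))‖_{L¹}` for all Schwartz `φ`;
i.e. `η` is bounded in the Wiener amalgam `W(A,ℓ∞)` norm. -/
theorem spreading_function_extension_amalgam
    (H : Type*) [NormedAddCommGroup H] [InnerProductSpace ℂ H]
    (g : SchwartzMap (ℝ × ℝ) ℂ) (hg : g ≠ 0)
    (η : SchwartzMap (ℝ × ℝ) ℂ →ₗ[ℂ] H)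
    (C₁ : ℝ) (hC₁ : 0 < C₁)
    (hbound : ∀ φ : SchwartzMap (ℝ × ℝ) ℂ, ‖η φ‖ ≤ C₁ * M1Norm2 g φ)
    (K : Set (ℝ × ℝ)) (hK : IsCompact K)
    (hsupp : ∀ φ : SchwartzMap (ℝ × ℝ) ℂ,
      (∃ U : Set (ℝ × ℝ), IsOpen U ∧ K ⊆ U ∧ ∀ x ∈ U, φ x = 0) → η φ = 0)
    (ψ : ℝ × ℝ → ℂ) (hψ_smooth : ContDiff ℝ (⊤ : ℕ∞) ψ) (hψ_supp : HasCompactSupport ψ)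
    (hψ_pou : ∀ x : ℝ × ℝ, ∑' n : ℤ × ℤ, ψ (x - ((n.1 : ℝ), (n.2 : ℝ))) = 1) :
    ∃ C₂ : ℝ, 0 < C₂ ∧ ∀ φ : SchwartzMap (ℝ × ℝ) ℂ,
      ‖η φ‖ ≤ C₂ * ⨆ n : ℤ × ℤ, fourierL1 (fun x => φ x * ψ (x - ((n.1 : ℝ), (n.2 : ℝ)))) := by
  obtain ⟨R, hR⟩ := hK.isBounded.subset_ball (0 : ℝ × ℝ)
  obtain ⟨r, hr⟩ := hψ_supp.isCompact.isBounded.subset_closedBall (0 : ℝ × ℝ)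
  have hψr : ∀ y, ψ y ≠ 0 → ‖y‖ ≤ r := fun y hy => by
    simpa using hr (subset_tsupport ψ hy)
  obtain ⟨N, hN⟩ := exists_nat_ge (R + r)
  -- Only the translates by `n` with `|n₁|, |n₂| ≤ N` meet the ball of radius `R` around `0`.
  let S : Finset (ℤ × ℤ) := Finset.Icc (-(N : ℤ)) N ×ˢ Finset.Icc (-(N : ℤ)) N
  have hnorm : ∀ n : ℤ × ℤ, n ∈ S ↔ ‖((n.1 : ℝ), (n.2 : ℝ))‖ ≤ N := by
    intro n
    simp only [S, Finset.mem_product, Finset.mem_Icc, Prod.norm_mk, sup_le_iff,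
      Real.norm_eq_abs, abs_le]
    norm_cast
  have hsum : ∀ x ∈ Metric.ball (0 : ℝ × ℝ) R,
      ∑ n ∈ S, ψ (x - ((n.1 : ℝ), (n.2 : ℝ))) = 1 := by
    intro x hx
    rw [← hψ_pou x, tsum_eq_sum]
    intro n hn
    by_contra h
    refine hn ((hnorm n).2 ?_)
    have h1 := hψr _ h
    have h2 : ‖x‖ < R := by simpa using hx
    have h3 := norm_sub_le x (x - ((n.1 : ℝ), (n.2 : ℝ)))
    rw [sub_sub_cancel] at h3
    linarith
  -- A cutoff equal to `1` on the supports of all `ψ(· - n)`, `n ∈ S`.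
  let b : ContDiffBump (0 : ℝ × ℝ) :=
    { rIn := |r| + N + 1, rOut := |r| + N + 2, rIn_pos := by positivity, rIn_lt_rOut := by linarith }
  let θ : SchwartzMap (ℝ × ℝ) ℂ :=
    HasCompactSupport.toSchwartzMap (f := fun x => ((b x : ℝ) : ℂ))
      (b.hasCompactSupport.comp_left Complex.ofReal_zero)
      (Complex.ofRealCLM.contDiff.comp b.contDiff)
  have hθ : ∀ x, ‖x‖ ≤ |r| + N + 1 → θ x = 1 := by
    intro x hx
    change ((b x : ℝ) : ℂ) = 1
    rw [b.one_of_mem_closedBall (by simpa using hx)]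
    simp
  obtain ⟨D, hD0, hD⟩ := M1Norm2_le g θ
  let ψS : SchwartzMap (ℝ × ℝ) ℂ := hψ_supp.toSchwartzMap hψ_smooth
  let ψn : ℤ × ℤ → SchwartzMap (ℝ × ℝ) ℂ := fun n =>
    SchwartzMap.compSubConstCLM ℂ ((n.1 : ℝ), (n.2 : ℝ)) ψS
  have hψn : ∀ n x, ψn n x = ψ (x - ((n.1 : ℝ), (n.2 : ℝ))) := fun n x => rfl
  refine ⟨C₁ * D * S.card + 1, by positivity, fun φ => ?_⟩
  set s := ⨆ n : ℤ × ℤ, fourierL1 (fun x => φ x * ψ (x - ((n.1 : ℝ), (n.2 : ℝ)))) with hs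
  have hs0 : 0 ≤ s := Real.iSup_nonneg fun _ => fourierL1_nonneg _
  have hbdd : BddAbove (Set.range fun n : ℤ × ℤ =>
      fourierL1 (fun x => φ x * ψ (x - ((n.1 : ℝ), (n.2 : ℝ))))) := by
    refine ⟨fourierL1 φ * fourierL1 ψ, ?_⟩
    rintro _ ⟨n, rfl⟩
    have h := fourierL1_mul_le φ (ψn n)
    rwa [show fourierL1 (ψn n) = fourierL1 ψ from fourierL1_translate ψ _] at h
  have hdecomp : η φ = ∑ n ∈ S, η (mulS φ (ψn n)) := by
    rw [← map_sum, ← sub_eq_zero, ← map_sub]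
    refine hsupp _ ⟨Metric.ball 0 R, Metric.isOpen_ball, hR, fun x hx => ?_⟩
    rw [sub_apply, sum_apply]
    simp only [mulS_apply, hψn]
    rw [← Finset.mul_sum, hsum x hx, mul_one, sub_self]
  have hterm : ∀ n ∈ S, ‖η (mulS φ (ψn n))‖ ≤ C₁ * D * s := by
    intro n hn
    have hloc : ∀ x, mulS φ (ψn n) x = mulS φ (ψn n) x * θ x := by
      intro x
      by_cases h : ψ (x - ((n.1 : ℝ), (n.2 : ℝ))) = 0
      · simp [mulS_apply, hψn, h]
      · have h1 := hψr _ h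
        have h2 := (hnorm n).1 hn
        have h3 := norm_add_le (x - ((n.1 : ℝ), (n.2 : ℝ))) ((n.1 : ℝ), (n.2 : ℝ))
        rw [sub_add_cancel] at h3
        rw [hθ x (by linarith [le_abs_self r]), mul_one]
    calc ‖η (mulS φ (ψn n))‖ ≤ C₁ * M1Norm2 g (mulS φ (ψn n)) := hbound _
      _ ≤ C₁ * (D * fourierL1 (mulS φ (ψn n))) := by
          gcongr
          exact hD _ hloc
      _ ≤ C₁ * (D * s) := by
          gcongr
          exact le_ciSup hbdd n
      _ = C₁ * D * s := by ring
  calc ‖η φ‖ ≤ ∑ n ∈ S, ‖η (mulS φ (ψn n))‖ := by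
        rw [hdecomp]
        exact norm_sum_le _ _
    _ ≤ S.card • (C₁ * D * s) := Finset.sum_le_card_nsmul _ _ _ hterm
    _ ≤ (C₁ * D * S.card + 1) * s := by
        rw [nsmul_eq_mul]
        linarith

end
end

section
/- Let L, K ∈ ℕ, let I be an index set with |I| = L, let G ∈ ℂ^{K×I}, and let Λ ⊆ I × I be admissible, i.e. (i, j) ∈ Λ implies (i, i) ∈ Λ, (j, j) ∈ Λ, and (j, i) ∈ Λ. For a matrix X ∈ ℂ^{I×I} write supp X ⊆ Λ to mean X_{ij} = 0 for all (i,j) ∉ Λ. Then the following are equivalent: (i) the map X ↦ G X Gᴴ is injective on the set of positive semidefinite matrices X ∈ ℂ^{I×I} with supp X ⊆ Λ; (ii) the only Hermitian matrix N ∈ ℂ^{I×I} with supp N ⊆ Λ and G N Gᴴ = 0 is N = 0; (iii) the linear map from {X ∈ ℂ^{I×I} : supp X ⊆ Λ} to ℂ^{K×K} given by X ↦ G X Gᴴ is injective (equivalently, the columns of the Kronecker product conj(G) ⊗ G indexed by Λ are linearly independent, i.e. the submatrix (G ⊗ conj(G))|_Λ has a left inverse). -/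
/-!
The key point is that every Hermitian `N` supported in an admissible `Λ` is a difference of two
positive semidefinite matrices supported in `Λ`: with `D = diagonal (fun i => ∑ j, ‖N i j‖)`, both
`D` and `N + D` are positive semidefinite, the latter by diagonal dominance
(`posSemidef_add_rowSumDiag`). Admissibility puts `D` in the pattern, since a nonzero row `i` of `N`
forces `(i, i) ∈ Λ`. Hence injectivity on the positive semidefinite cone kills Hermitian kernel
elements. Passing from Hermitian to arbitrary kernel elements `M` uses that `M + Mᴴ` and
`i (M - Mᴴ)` are Hermitian kernel elements, again supported in `Λ` because `Λ` is symmetric.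
-/

open Matrix
open scoped ComplexOrder

/-- The diagonal matrix whose `i`-th entry is the `ℓ¹` norm of the `i`-th row of `N`. -/
noncomputable def rowSumDiag {I : Type*} [Fintype I] [DecidableEq I] (N : Matrix I I ℂ) :
    Matrix I I ℂ :=
  diagonal fun i => ((∑ j, ‖N i j‖ : ℝ) : ℂ)

lemma posSemidef_rowSumDiag {I : Type*} [Fintype I] [DecidableEq I] (N : Matrix I I ℂ) :
    (rowSumDiag N).PosSemidef := by
  refine PosSemidef.diagonal fun i => ?_
  exact Complex.zero_le_real.mpr (Finset.sum_nonneg fun j _ => norm_nonneg _)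

/-- Diagonal dominance: the cross term `‖N i j‖ |x i| |x j|` is absorbed by
`‖N i j‖ (|x i|² + |x j|²) / 2`, and `‖N i j‖ = ‖N j i‖` lets the two halves be summed
row by row. -/
lemma posSemidef_add_rowSumDiag {I : Type*} [Fintype I] [DecidableEq I] {N : Matrix I I ℂ}
    (hN : N.IsHermitian) : (N + rowSumDiag N).PosSemidef := by
  have hH : (N + rowSumDiag N).IsHermitian := hN.add (posSemidef_rowSumDiag N).isHermitian
  refine PosSemidef.of_dotProduct_mulVec_nonneg hH fun x => ?_
  have hsymm : ∀ i j, ‖N i j‖ = ‖N j i‖ := fun i j => by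
    rw [← hN.apply i j, norm_star]
  have hre : ((star x ⬝ᵥ (N + rowSumDiag N) *ᵥ x)).re =
      ∑ i, ∑ j, ((star (x i) * N i j * x j).re + ‖N i j‖ * ‖x i‖ ^ 2) := by
    rw [add_mulVec, dotProduct_add, Complex.add_re]
    simp only [Finset.sum_add_distrib]
    congr 1
    · simp only [dotProduct, mulVec, Finset.mul_sum, Complex.re_sum, Pi.star_apply, mul_assoc]
    · simp only [rowSumDiag, dotProduct, mulVec_diagonal, Complex.re_sum, Pi.star_apply,
        ← Finset.sum_mul]
      refine Finset.sum_congr rfl fun i _ => ?_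
      have : star (x i) * (((∑ j, ‖N i j‖ : ℝ) : ℂ) * x i) =
          (((∑ j, ‖N i j‖) * ‖x i‖ ^ 2 : ℝ) : ℂ) := by
        have h := Complex.conj_mul' (x i)
        rw [Complex.star_def, mul_left_comm, h]
        push_cast
        ring
      rw [this, Complex.ofReal_re]
  have hswap : ∑ i, ∑ j, ‖N i j‖ * ‖x i‖ ^ 2 = ∑ i, ∑ j, ‖N i j‖ * ‖x j‖ ^ 2 := by
    rw [Finset.sum_comm]
    exact Finset.sum_congr rfl fun i _ => Finset.sum_congr rfl fun j _ => by rw [hsymm]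
  have hsum : 0 ≤ ∑ i, ∑ j, ((star (x i) * N i j * x j).re +
      (‖N i j‖ * ‖x i‖ ^ 2 + ‖N i j‖ * ‖x j‖ ^ 2) / 2) := by
    refine Finset.sum_nonneg fun i _ => Finset.sum_nonneg fun j _ => ?_
    have h1 := (abs_le.mp (Complex.abs_re_le_norm (star (x i) * N i j * x j))).1
    rw [norm_mul, norm_mul, norm_star] at h1
    nlinarith [mul_nonneg (norm_nonneg (N i j)) (sq_nonneg (‖x i‖ - ‖x j‖))]
  rw [Complex.nonneg_iff]
  refine ⟨?_, (hH.im_star_dotProduct_mulVec_self x).symm⟩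
  rw [hre]
  simp only [Finset.sum_add_distrib, ← Finset.sum_div] at hsum ⊢
  linarith

/-- **Equivalent characterizations of identifiability of a support pattern.**
Let `G ∈ ℂ^{K×I}` with `|I| = L` and let `Λ ⊆ I × I` be admissible. Then the following
are equivalent: (i) `X ↦ G X Gᴴ` is injective on positive semidefinite matrices
supported in `Λ`; (ii) the only Hermitian matrix `N` supported in `Λ` with `G N Gᴴ = 0`
is `N = 0`; (iii) `X ↦ G X Gᴴ` is injective on all matrices supported in `Λ`. -/
theorem pattern_identifiability_tfae (K L : ℕ) (I : Type*) [Fintype I] [DecidableEq I]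
    (hcard : Fintype.card I = L)
    (G : Matrix (Fin K) I ℂ) (Λ : Set (I × I))
    (hadm : ∀ i j : I, (i, j) ∈ Λ → (i, i) ∈ Λ ∧ (j, j) ∈ Λ ∧ (j, i) ∈ Λ) :
    (Set.InjOn (fun X : Matrix I I ℂ => G * X * Gᴴ)
        {X : Matrix I I ℂ | X.PosSemidef ∧ ∀ p : I × I, p ∉ Λ → X p.1 p.2 = 0} ↔
      (∀ N : Matrix I I ℂ, N.IsHermitian → (∀ p : I × I, p ∉ Λ → N p.1 p.2 = 0) →
        G * N * Gᴴ = 0 → N = 0)) ∧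
    ((∀ N : Matrix I I ℂ, N.IsHermitian → (∀ p : I × I, p ∉ Λ → N p.1 p.2 = 0) →
        G * N * Gᴴ = 0 → N = 0) ↔
      Set.InjOn (fun X : Matrix I I ℂ => G * X * Gᴴ)
        {X : Matrix I I ℂ | ∀ p : I × I, p ∉ Λ → X p.1 p.2 = 0}) := by
  have hsub : ∀ X Y : Matrix I I ℂ, G * X * Gᴴ = G * Y * Gᴴ → G * (X - Y) * Gᴴ = 0 := by
    intro X Y h
    rw [Matrix.mul_sub, Matrix.sub_mul, h, sub_self]
  have hsymm : ∀ p : I × I, p ∉ Λ → (p.2, p.1) ∉ Λ := fun p hp h => hp (hadm _ _ h).2.2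
  refine ⟨⟨fun h N hN hs hG => ?_, fun h X hX Y hY hXY => ?_⟩,
    ⟨fun h X hX Y hY hXY => ?_, fun h N _ hs hG => ?_⟩⟩
  · have hD : ∀ p : I × I, p ∉ Λ → rowSumDiag N p.1 p.2 = 0 := by
      rintro ⟨i, j⟩ hp
      rcases eq_or_ne i j with rfl | hij
      · have hrow : ∀ j, N i j = 0 := fun j => hs (i, j) fun hm => hp (hadm _ _ hm).1
        simp [rowSumDiag, hrow]
      · simp [rowSumDiag, hij]
    have key : N + rowSumDiag N = rowSumDiag N := by
      refine h ⟨posSemidef_add_rowSumDiag hN, fun p hp => ?_⟩ ⟨posSemidef_rowSumDiag N, hD⟩ ?_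
      · rw [Matrix.add_apply, hs p hp, hD p hp, add_zero]
      · simp only [Matrix.mul_add, Matrix.add_mul, hG, zero_add]
    exact add_eq_right.mp key
  · refine sub_eq_zero.mp (h _ (hX.1.isHermitian.sub hY.1.isHermitian) (fun p hp => ?_)
      (hsub X Y hXY))
    rw [Matrix.sub_apply, hX.2 p hp, hY.2 p hp, sub_zero]
  · obtain ⟨M, hM⟩ : ∃ M, M = X - Y := ⟨_, rfl⟩
    have hMG : G * M * Gᴴ = 0 := hM ▸ hsub X Y hXY
    have hMs : ∀ p : I × I, p ∉ Λ → M p.1 p.2 = 0 := fun p hp => by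
      rw [hM, Matrix.sub_apply, hX p hp, hY p hp, sub_zero]
    have hMs' : ∀ p : I × I, p ∉ Λ → Mᴴ p.1 p.2 = 0 := fun p hp => by
      rw [conjTranspose_apply, hMs _ (hsymm p hp), star_zero]
    have hMG' : G * Mᴴ * Gᴴ = 0 := by
      have := congrArg conjTranspose hMG
      simpa [conjTranspose_mul, Matrix.mul_assoc] using this
    have h1 : M + Mᴴ = 0 := by
      refine h _ (isHermitian_add_transpose_self M) (fun p hp => ?_) ?_
      · rw [Matrix.add_apply, hMs p hp, hMs' p hp, add_zero]
      · rw [Matrix.mul_add, Matrix.add_mul, hMG, hMG', add_zero]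
    have h2 : Complex.I • (M - Mᴴ) = 0 := by
      refine h _ ?_ (fun p hp => ?_) ?_
      · rw [IsHermitian, conjTranspose_smul, conjTranspose_sub, conjTranspose_conjTranspose,
          Complex.star_def, Complex.conj_I, neg_smul, ← smul_neg, neg_sub]
      · rw [Matrix.smul_apply, Matrix.sub_apply, hMs p hp, hMs' p hp, sub_zero, smul_zero]
      · rw [Matrix.mul_smul, Matrix.smul_mul, Matrix.mul_sub, Matrix.sub_mul, hMG, hMG', sub_zero,
          smul_zero]
    have h3 : M - Mᴴ = 0 := (smul_eq_zero.mp h2).resolve_left Complex.I_ne_zero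
    have h4 : M = 0 := by
      have h5 : (2 : ℂ) • M = 0 := by
        rw [two_smul, ← add_zero (0 : Matrix I I ℂ)]
        nth_rewrite 1 [← h1]
        rw [← h3]
        abel
      exact (smul_eq_zero.mp h5).resolve_left two_ne_zero
    exact sub_eq_zero.mp (hM ▸ h4)
  · exact h hs (fun _ _ => rfl) (by simp [hG])
end

section
/- Let 1 ≤ p₁, p₂ ≤ ∞ with conjugate exponent q₁ (1/p₁ + 1/q₁ = 1), let d₁, d₂ ∈ ℕ, and let λ > λ' > 0. Let M : ℤ^{d₂} × ℤ^{d₁} → ℂ be a bi-infinite matrix such that: (i) there exist constants r₁, r₂ ≥ 0 and a non-increasing function w : ℝ → [0,∞) with w(x) = o(x^{−r}) as x → +∞, where r > d₁/q₁ + d₂/p₂ + r₁ + r₂, r > d₁/q₁, and r > r₂ − 1/q₁ + d₁/q₁ + d₂/p₂, such that |M_{z₂,z₁}| ≤ w(λ‖z₂‖_∞ − ‖z₁‖_∞) · (1 + ‖z₁‖_∞)^{r₁} · (1 + ‖z₂‖_∞)^{r₂} for all z₁, z₂; and (ii) for every N₀ ∈ ℕ there exists N₂ > N₀ such that the finite submatrix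 [M_{z₂,z₁} : ‖z₁‖_∞ ≤ ⌊λ'N₂⌋, ‖z₂‖_∞ ≤ N₂] has a nontrivial kernel. Then for every ε > 0 there exists a finitely supported x : ℤ^{d₁} → ℂ with ‖x‖_{ℓ^{p₁}} = 1 and ‖Mx‖_{ℓ^{p₂}} < ε, where (Mx)_{z₂} = ∑_{z₁} M_{z₂,z₁} x_{z₁} (a finite sum). In particular, M has no bounded left inverse as an operator ℓ^{p₁}(ℤ^{d₁}) → ℓ^{p₂}(ℤ^{d₂}). -/
/-!
Let `A = d₁/q₁`, `B = d₂/p₂` and `δ = r - A - B - r₁ - r₂ > 0`. Take a kernel vector of the minor of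
size `N = N₂`, extended by zero and normalised in `ℓ^{p₁}`. Then `Mx` vanishes on `‖z₂‖ ≤ N`. For
`n = ‖z₂‖ > N` every `z₁` in the support of `x` satisfies `λ n - ‖z₁‖ ≥ (λ - λ') n`, so the decay of
`M` and the Hölder bound `‖x‖₁ ≤ (2λ'N + 1)^A` (`sum_norm_le_of_eLpNorm_eq_one`) give
`|(Mx)_{z₂}| ≤ w((λ - λ') n) (1 + λ'N)^{r₁} (1 + n)^{r₂} (2λ'N + 1)^A`. Since `N < n`, each power of
`N` is at most the same power of `n`, up to a constant. If moreover `w(x) ≤ c x^{-r}` for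
`x ≥ (λ - λ') N`, the right-hand side is at most `c C (1 + n)^{-(B + δ)}` with `C` independent of `N` and `c`
(`decay_bound`). The weight `(1 + ‖z₂‖)^{-(B + δ)}` belongs to `ℓ^{p₂}`
(`memLp_one_add_norm_rpow_int`), and `c` may be chosen arbitrarily small because `w = o(x^{-r})`.
-/

open MeasureTheory Filter
open scoped ENNReal

/-- Obtained from the summability of `‖z‖^(-t)` over a lattice in `ℝ^d`, via `ℤ^d ⊆ ℝ^d`; adding `1`
to the norm only matters at the origin. -/
lemma summable_one_add_norm_rpow_int (d : ℕ) {t : ℝ} (ht : (d : ℝ) < t) :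
    Summable fun z : Fin d → ℤ => (1 + ‖z‖) ^ (-t) := by
  let L : Submodule ℤ (Fin d → ℝ) := Submodule.span ℤ (Set.range (Pi.basisFun ℝ (Fin d)))
  have hrank : Module.finrank ℤ L = d := by
    rw [ZLattice.rank ℝ L]; simp
  have hL : Summable fun z : L => ‖z‖ ^ (-t) :=
    ZLattice.summable_norm_rpow L (-t) (by rw [hrank]; linarith)
  have hmem : ∀ z : Fin d → ℤ, (fun i => (z i : ℝ)) ∈ L := fun z => by
    rw [Module.Basis.mem_span_iff_repr_mem]
    intro i
    exact ⟨z i, by simp⟩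
  let f : (Fin d → ℤ) → L := fun z => ⟨fun i => (z i : ℝ), hmem z⟩
  have hf : Function.Injective f := fun a b hab => by
    funext i
    have := congrFun (congrArg Subtype.val hab) i
    simpa [f] using this
  have hnorm : ∀ z, ‖f z‖ = ‖z‖ := fun z => by
    simp [f, Pi.norm_def, nnnorm]
    congr
  have h2 := hL.comp_injective hf
  refine Summable.of_norm_bounded_eventually h2 ?_
  filter_upwards [(Set.finite_singleton (0 : Fin d → ℤ)).compl_mem_cofinite] with z hz
  have hz' : 0 < ‖z‖ := norm_pos_iff.2 hz
  rw [Function.comp_apply, hnorm, Real.norm_of_nonneg (by positivity)]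
  exact Real.rpow_le_rpow_of_nonpos hz' (by linarith)
    (by have : (0:ℝ) ≤ d := d.cast_nonneg; linarith)

lemma memLp_one_add_norm_rpow_int (d : ℕ) {p : ℝ≥0∞} (hp : 1 ≤ p) {s : ℝ}
    (hs : ((d : ℝ≥0∞) / p).toReal < s) :
    MemLp (fun z : Fin d → ℤ => (1 + ‖z‖) ^ (-s)) p Measure.count := by
  have hs0 : 0 < s := ENNReal.toReal_nonneg.trans_lt hs
  have hmeas : AEStronglyMeasurable (fun z : Fin d → ℤ => (1 + ‖z‖) ^ (-s)) Measure.count :=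
    (measurable_of_countable _).aestronglyMeasurable
  by_cases hpt : p = ∞
  · subst hpt
    refine memLp_top_of_bound hmeas 1 (Eventually.of_forall fun z => ?_)
    rw [Real.norm_of_nonneg (by positivity)]
    exact Real.rpow_le_one_of_one_le_of_nonpos (by linarith [norm_nonneg z]) (by linarith)
  · have hp0 : p ≠ 0 := (zero_lt_one.trans_le hp).ne'
    have hpr : 0 < p.toReal := ENNReal.toReal_pos hp0 hpt
    rw [← integrable_norm_rpow_iff hmeas hp0 hpt, integrable_count_iff]
    have hd : (d : ℝ) < s * p.toReal := by
      rw [ENNReal.toReal_div, ENNReal.toReal_natCast, div_lt_iff₀ hpr] at hs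
      exact hs
    refine (summable_one_add_norm_rpow_int d hd).congr fun z => ?_
    have h0 : 0 ≤ (1 + ‖z‖) ^ (-s) := by positivity
    rw [Real.norm_of_nonneg h0, ← Real.rpow_mul (by positivity), neg_mul,
      Real.norm_of_nonneg (by positivity)]

/-- Hölder's inequality on the cube `{‖z‖_∞ ≤ K}`: it has `(2K+1)^d` points, so a vector of unit
`ℓ^p` norm supported in it has `ℓ¹` norm at most `(2K+1)^(d/q)`. -/
lemma sum_norm_le_of_eLpNorm_eq_one {d K : ℕ} {p q : ℝ≥0∞} (hp : 1 ≤ p)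
    (hpq : 1 / p + 1 / q = 1) {x : (Fin d → ℤ) → ℂ}
    (hx : ∀ z, x z ≠ 0 → z ∈ Fintype.piFinset fun _ : Fin d => Finset.Icc (-K : ℤ) K)
    (hx1 : eLpNorm x p Measure.count = 1) :
    ∑ z ∈ Fintype.piFinset (fun _ : Fin d => Finset.Icc (-K : ℤ) K), ‖x z‖ ≤
      (2 * K + 1 : ℝ) ^ ((d : ℝ≥0∞) / q).toReal := by
  set S := Fintype.piFinset fun _ : Fin d => Finset.Icc (-K : ℤ) K with hS
  have hcard : (S.card : ℝ) = (2 * K + 1 : ℝ) ^ d := by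
    rw [hS, Fintype.card_piFinset_const, Int.card_Icc]
    have : (K + 1 - -(K : ℤ)).toNat = 2 * K + 1 := by omega
    rw [this]; push_cast; rfl
  have hsupp : Function.support x ⊆ (S : Set (Fin d → ℤ)) := fun z hz => hx z hz
  have hmeas : AEStronglyMeasurable x (Measure.count.restrict (S : Set (Fin d → ℤ))) :=
    (measurable_of_countable _).aestronglyMeasurable
  have key := eLpNorm_le_eLpNorm_mul_rpow_measure_univ hp hmeas
  rw [eLpNorm_restrict_eq_of_support_subset hsupp, eLpNorm_restrict_eq_of_support_subset hsupp,
    hx1, one_mul, Measure.restrict_apply_univ, Measure.count_apply_finset,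
    eLpNorm_one_eq_lintegral_enorm, lintegral_count,
    tsum_eq_sum (s := S) fun z hz => by
      have : x z = 0 := by_contra fun h => hz (hx z h)
      simp [this]] at key
  have hexp : 1 / (1 : ℝ≥0∞).toReal - 1 / p.toReal = (1 / q).toReal := by
    have h1 : (1 / p).toReal + (1 / q).toReal = 1 := by
      have hle : 1 / p + 1 / q ≠ ∞ := by rw [hpq]; simp
      rw [ENNReal.add_ne_top] at hle
      rw [← ENNReal.toReal_add hle.1 hle.2, hpq, ENNReal.toReal_one]
    have h2 : (1 / p).toReal = 1 / p.toReal := by simp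
    rw [ENNReal.toReal_one, ← h2]; linarith
  rw [hexp] at key
  have key2 := ENNReal.toReal_mono (by
    exact ENNReal.rpow_ne_top_of_nonneg ENNReal.toReal_nonneg (by simp)) key
  rw [ENNReal.toReal_sum (by simp), ← ENNReal.toReal_rpow, ENNReal.toReal_natCast, hcard] at key2
  simp only [toReal_enorm] at key2
  refine key2.trans_eq ?_
  rw [← Real.rpow_natCast, ← Real.rpow_mul (by positivity)]
  congr 1
  simp [div_eq_mul_inv]

/-- A nonzero vector supported in a cube can be rescaled to have unit `ℓ^p` norm. -/
lemma exists_const_mul_eLpNorm_eq_one {d : ℕ} {p : ℝ≥0∞} (hp : 1 ≤ p)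
    {x : (Fin d → ℤ) → ℂ} {S : Finset (Fin d → ℤ)} (hx : ∀ z, x z ≠ 0 → z ∈ S) (hx0 : x ≠ 0) :
    ∃ a : ℂ, eLpNorm (fun z => a * x z) p Measure.count = 1 := by
  have hmeas : AEStronglyMeasurable x Measure.count :=
    (measurable_of_countable _).aestronglyMeasurable
  have hzero : ∀ z ∉ S, x z = 0 := fun z hz => by_contra fun h => hz (hx z h)
  have htop : MemLp x ∞ Measure.count := by
    refine memLp_top_of_bound hmeas (∑ z ∈ S, ‖x z‖) (Eventually.of_forall fun z => ?_)
    by_cases hz : z ∈ S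
    · exact Finset.single_le_sum (f := fun z => ‖x z‖) (fun _ _ => norm_nonneg _) hz
    · rw [hzero z hz, norm_zero]
      positivity
  have hmem : MemLp x p Measure.count :=
    htop.mono_exponent_of_measure_support_ne_top (s := (S : Set (Fin d → ℤ))) hzero
      (by simp) le_top
  have hne : eLpNorm x p Measure.count ≠ 0 := by
    rw [Ne, eLpNorm_eq_zero_iff hmeas (zero_lt_one.trans_le hp).ne']
    intro h
    exact hx0 (funext (Measure.ae_count_iff.1 h))
  have hpos : 0 < (eLpNorm x p Measure.count).toReal := ENNReal.toReal_pos hne hmem.2.ne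
  refine ⟨(((eLpNorm x p Measure.count).toReal)⁻¹ : ℝ), ?_⟩
  have h := eLpNorm_const_smul ((((eLpNorm x p Measure.count).toReal)⁻¹ : ℝ) : ℂ) x p
    Measure.count
  have h' : ‖((((eLpNorm x p Measure.count).toReal)⁻¹ : ℝ) : ℂ)‖ₑ
      = (eLpNorm x p Measure.count)⁻¹ := by
    rw [← ofReal_norm, Complex.norm_real, Real.norm_of_nonneg (by positivity),
      ENNReal.ofReal_inv_of_pos hpos, ENNReal.ofReal_toReal hmem.2.ne]
  rw [h', ENNReal.inv_mul_cancel hne hmem.2.ne] at h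
  exact h

/-- The scalar estimate behind the tail bound: for `1 ≤ N ≤ n` the powers of `N` are absorbed into
powers of `1 + n`, leaving a constant that does not depend on `N`, `K`, `n` or `c`. -/
lemma decay_bound {μ l N n K c A r r₁ r₂ W : ℝ} (hμ : 0 < μ) (hl : 0 < l) (hN : 1 ≤ N)
    (hn : N ≤ n) (hK0 : 0 ≤ K) (hK : K ≤ l * N) (hA : 0 ≤ A) (hr : 0 ≤ r)
    (hr₁ : 0 ≤ r₁) (hc : 0 ≤ c) (hW : W ≤ c * (μ * n) ^ (-r)) :
    W * (1 + K) ^ r₁ * (1 + n) ^ r₂ * (2 * K + 1) ^ A ≤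
      c * ((μ / 2) ^ (-r) * (2 * l + 1) ^ (r₁ + A)) * (1 + n) ^ (-(r - A - r₁ - r₂)) := by
  have hn1 : 0 < 1 + n := by linarith
  have hH : 0 < 2 * l + 1 := by linarith
  have hKn : K ≤ l * n := hK.trans (by gcongr)
  have e1 : (μ * n) ^ (-r) ≤ (μ / 2) ^ (-r) * (1 + n) ^ (-r) := by
    rw [← Real.mul_rpow (by positivity) hn1.le]
    exact Real.rpow_le_rpow_of_nonpos (by positivity) (by nlinarith) (by linarith)
  have e2 : (1 + K) ^ r₁ ≤ (2 * l + 1) ^ r₁ * (1 + n) ^ r₁ := by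
    rw [← Real.mul_rpow hH.le hn1.le]
    exact Real.rpow_le_rpow (by linarith) (by nlinarith) hr₁
  have e3 : (2 * K + 1) ^ A ≤ (2 * l + 1) ^ A * (1 + n) ^ A := by
    rw [← Real.mul_rpow hH.le hn1.le]
    exact Real.rpow_le_rpow (by linarith) (by nlinarith) hA
  have e4 : W ≤ c * ((μ / 2) ^ (-r) * (1 + n) ^ (-r)) :=
    hW.trans (mul_le_mul_of_nonneg_left e1 hc)
  calc W * (1 + K) ^ r₁ * (1 + n) ^ r₂ * (2 * K + 1) ^ A
      ≤ c * ((μ / 2) ^ (-r) * (1 + n) ^ (-r)) * ((2 * l + 1) ^ r₁ * (1 + n) ^ r₁)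
          * (1 + n) ^ r₂ * ((2 * l + 1) ^ A * (1 + n) ^ A) := by
        gcongr
    _ = c * ((μ / 2) ^ (-r) * ((2 * l + 1) ^ r₁ * (2 * l + 1) ^ A)) *
          ((1 + n) ^ (-r) * (1 + n) ^ r₁ * (1 + n) ^ r₂ * (1 + n) ^ A) := by ring
    _ = _ := by
        rw [← Real.rpow_add hH, ← Real.rpow_add hn1, ← Real.rpow_add hn1, ← Real.rpow_add hn1]
        congr 2
        ring

/-- **Bi-infinite matrices with polynomially-weighted slanted-diagonal decay and singular
slanted minors have no bounded left inverse** (general version, generalizing Theorem 2.1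
of Pfander (2005)). If the entries of `M : ℤ^{d₂} × ℤ^{d₁} → ℂ` decay away from the
`λ`-slanted diagonal with polynomial weights `(1+‖z₁‖)^{r₁} (1+‖z₂‖)^{r₂}` and decay rate
`w(x) = o(x^{−r})` with `r` large enough, and arbitrarily large `λ'`-slanted principal
minors of `M` are singular (`0 < λ' < λ`), then for every `ε > 0` there is a finitely
supported `x` with `‖x‖_{ℓ^{p₁}} = 1` and `‖Mx‖_{ℓ^{p₂}} < ε`. -/
theorem biinfinite_no_left_inverse_general
    (p₁ q₁ p₂ : ℝ≥0∞) (hp₁ : 1 ≤ p₁) (hp₂ : 1 ≤ p₂) (hq₁ : 1 / p₁ + 1 / q₁ = 1)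
    (d₁ d₂ : ℕ) (lam lam' : ℝ) (hlam' : 0 < lam') (hll : lam' < lam)
    (M : (Fin d₂ → ℤ) → (Fin d₁ → ℤ) → ℂ)
    (r r₁ r₂ : ℝ) (hr₁ : 0 ≤ r₁) (hr₂ : 0 ≤ r₂)
    (hr : r > ((d₁ : ℝ≥0∞) / q₁).toReal + ((d₂ : ℝ≥0∞) / p₂).toReal + r₁ + r₂)
    (hr' : r > ((d₁ : ℝ≥0∞) / q₁).toReal)
    (hr'' : r > r₂ - (1 / q₁).toReal + ((d₁ : ℝ≥0∞) / q₁).toReal + ((d₂ : ℝ≥0∞) / p₂).toReal)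
    (w : ℝ → ℝ) (hw_nonneg : ∀ x, 0 ≤ w x) (hw_mono : Antitone w)
    (hw_decay : w =o[atTop] fun x : ℝ => x ^ (-r))
    (hM_decay : ∀ (z₂ : Fin d₂ → ℤ) (z₁ : Fin d₁ → ℤ),
      ‖M z₂ z₁‖ ≤ w (lam * ‖z₂‖ - ‖z₁‖) * (1 + ‖z₁‖) ^ r₁ * (1 + ‖z₂‖) ^ r₂)
    (hminors : ∀ N₀ : ℕ, ∃ N₂ : ℕ, N₀ < N₂ ∧
      ∃ x : (Fin d₁ → ℤ) → ℂ, x ≠ 0 ∧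
        (∀ z₁ : Fin d₁ → ℤ, x z₁ ≠ 0 → ‖z₁‖ ≤ (⌊lam' * (N₂ : ℝ)⌋ : ℝ)) ∧
        (∀ z₂ : Fin d₂ → ℤ, ‖z₂‖ ≤ (N₂ : ℝ) → ∑' z₁ : Fin d₁ → ℤ, M z₂ z₁ * x z₁ = 0)) :
    ∀ ε : ℝ, 0 < ε →
      ∃ x : (Fin d₁ → ℤ) → ℂ, (Function.support x).Finite ∧
        eLpNorm x p₁ Measure.count = 1 ∧
        eLpNorm (fun z₂ : Fin d₂ → ℤ => ∑' z₁ : Fin d₁ → ℤ, M z₂ z₁ * x z₁) p₂ Measure.count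
          < ENNReal.ofReal ε := by
  intro ε hε
  set A := ((d₁ : ℝ≥0∞) / q₁).toReal with hA
  set B := ((d₂ : ℝ≥0∞) / p₂).toReal with hB
  have hA0 : 0 ≤ A := ENNReal.toReal_nonneg
  have hr0 : 0 ≤ r := hA0.trans hr'.le
  have hμ : 0 < lam - lam' := sub_pos.2 hll
  set C := ((lam - lam') / 2) ^ (-r) * (2 * lam' + 1) ^ (r₁ + A) with hC
  have hC0 : 0 < C := by positivity
  have hg : MemLp (fun z : Fin d₂ → ℤ => (1 + ‖z‖) ^ (-(r - A - r₁ - r₂))) p₂ Measure.count :=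
    memLp_one_add_norm_rpow_int d₂ hp₂ (by linarith)
  set G := eLpNorm (fun z : Fin d₂ → ℤ => (1 + ‖z‖) ^ (-(r - A - r₁ - r₂))) p₂ Measure.count
    with hG
  have hG0 : 0 ≤ G.toReal := ENNReal.toReal_nonneg
  -- the smallness of `w` is chosen so that `c * C * G < ε`
  set c := ε / (C * (G.toReal + 1)) with hc
  have hc0 : 0 < c := by positivity
  obtain ⟨X, hX⟩ := eventually_atTop.1 (hw_decay.bound hc0)
  obtain ⟨N, hN, x₀, hx₀, hsupp, hker⟩ := hminors (⌈max X 0 / (lam - lam')⌉₊ + 1)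
  have hN1 : (1 : ℝ) ≤ N := by exact_mod_cast (show 1 ≤ N by omega)
  have hXN : X ≤ (lam - lam') * N := by
    have h1 : max X 0 / (lam - lam') ≤ N :=
      (Nat.le_ceil _).trans (by exact_mod_cast (show _ ≤ N by omega))
    rw [div_le_iff₀ hμ] at h1
    linarith [le_max_left X 0]
  have hlN : 0 ≤ lam' * (N : ℝ) := by positivity
  set K := ⌊lam' * (N : ℝ)⌋₊ with hK
  have hKle : (K : ℝ) ≤ lam' * N := Nat.floor_le hlN
  have hfloor : ((⌊lam' * (N : ℝ)⌋ : ℤ) : ℝ) = K := by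
    rw [hK, natCast_floor_eq_intCast_floor hlN]
  set S := Fintype.piFinset (fun _ : Fin d₁ => Finset.Icc (-K : ℤ) K) with hS
  have hsuppS : ∀ z, x₀ z ≠ 0 → z ∈ S := by
    intro z hz
    have h := hsupp z hz
    rw [hfloor, pi_norm_le_iff_of_nonneg (by positivity)] at h
    rw [hS, Fintype.mem_piFinset]
    intro i
    have hi := h i
    rw [Int.norm_eq_abs, abs_le] at hi
    rw [Finset.mem_Icc]
    exact ⟨by exact_mod_cast hi.1, by exact_mod_cast hi.2⟩
  obtain ⟨a, ha⟩ := exists_const_mul_eLpNorm_eq_one hp₁ hsuppS hx₀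
  set x : (Fin d₁ → ℤ) → ℂ := fun z => a * x₀ z with hx
  have hxx₀ : ∀ z, x z ≠ 0 → x₀ z ≠ 0 := fun z hz => right_ne_zero_of_mul hz
  have hxS : ∀ z, x z ≠ 0 → z ∈ S := fun z hz => hsuppS z (hxx₀ z hz)
  refine ⟨x, S.finite_toSet.subset fun z hz => hxS z hz, ha, ?_⟩
  have hl1 : ∑ z ∈ S, ‖x z‖ ≤ (2 * K + 1 : ℝ) ^ A := sum_norm_le_of_eLpNorm_eq_one hp₁ hq₁ hxS ha
  have hpoint : ∀ z₂ : Fin d₂ → ℤ, ‖∑' z₁, M z₂ z₁ * x z₁‖ ≤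
      c * C * ‖(1 + ‖z₂‖) ^ (-(r - A - r₁ - r₂))‖ := by
    intro z₂
    rcases le_or_gt ‖z₂‖ (N : ℝ) with hz | hz
    · have h0 : ∑' z₁, M z₂ z₁ * x z₁ = 0 := by
        have : ∀ z₁, M z₂ z₁ * x z₁ = a * (M z₂ z₁ * x₀ z₁) := fun z₁ => by
          simp only [hx]; ring
        rw [tsum_congr this, tsum_mul_left, hker z₂ hz, mul_zero]
      rw [h0, norm_zero]
      positivity
    · rw [Real.norm_of_nonneg (by positivity)]
      have hzpos : 0 < ‖z₂‖ := by linarith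
      have hW : w ((lam - lam') * ‖z₂‖) ≤ c * ((lam - lam') * ‖z₂‖) ^ (-r) := by
        have h := hX ((lam - lam') * ‖z₂‖) (hXN.trans (by gcongr))
        rwa [Real.norm_of_nonneg (hw_nonneg _), Real.norm_of_nonneg (by positivity)] at h
      rw [tsum_eq_sum (s := S) fun z hz => by
        have : x z = 0 := by_contra fun h => hz (hxS z h)
        simp [this]]
      have hentry : ∀ z₁, ‖M z₂ z₁ * x z₁‖ ≤
          w ((lam - lam') * ‖z₂‖) * (1 + K) ^ r₁ * (1 + ‖z₂‖) ^ r₂ * ‖x z₁‖ := by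
        intro z₁
        by_cases h0 : x z₁ = 0
        · simp [h0]
        have hz₁ : ‖z₁‖ ≤ K := hfloor ▸ hsupp z₁ (hxx₀ z₁ h0)
        have hw' : w (lam * ‖z₂‖ - ‖z₁‖) ≤ w ((lam - lam') * ‖z₂‖) := by
          apply hw_mono
          have : lam' * N ≤ lam' * ‖z₂‖ := by gcongr
          linarith
        rw [norm_mul]
        refine mul_le_mul_of_nonneg_right ((hM_decay z₂ z₁).trans ?_) (norm_nonneg _)
        have := hw_nonneg ((lam - lam') * ‖z₂‖)
        gcongr
      calc ‖∑ z₁ ∈ S, M z₂ z₁ * x z₁‖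
          ≤ ∑ z₁ ∈ S, w ((lam - lam') * ‖z₂‖) * (1 + K) ^ r₁ * (1 + ‖z₂‖) ^ r₂ * ‖x z₁‖ :=
            (norm_sum_le _ _).trans (Finset.sum_le_sum fun z₁ _ => hentry z₁)
        _ = w ((lam - lam') * ‖z₂‖) * (1 + K) ^ r₁ * (1 + ‖z₂‖) ^ r₂ * ∑ z₁ ∈ S, ‖x z₁‖ := by
            rw [Finset.mul_sum]
        _ ≤ w ((lam - lam') * ‖z₂‖) * (1 + K) ^ r₁ * (1 + ‖z₂‖) ^ r₂ * (2 * K + 1) ^ A := by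
            have := hw_nonneg ((lam - lam') * ‖z₂‖)
            gcongr
        _ ≤ _ := decay_bound hμ hlam' hN1 hz.le K.cast_nonneg hKle hA0 hr0 hr₁ hc0.le hW
  calc eLpNorm (fun z₂ : Fin d₂ → ℤ => ∑' z₁ : Fin d₁ → ℤ, M z₂ z₁ * x z₁) p₂ Measure.count
      ≤ ENNReal.ofReal (c * C) * G :=
        eLpNorm_le_mul_eLpNorm_of_ae_le_mul (Eventually.of_forall hpoint) p₂
    _ = ENNReal.ofReal (c * C * G.toReal) := by
        rw [ENNReal.ofReal_mul (by positivity : 0 ≤ c * C), ENNReal.ofReal_toReal hg.2.ne]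
    _ < ENNReal.ofReal ε := by
        rw [ENNReal.ofReal_lt_ofReal_iff hε, hc]
        have : ε / (C * (G.toReal + 1)) * C * G.toReal = ε * (G.toReal / (G.toReal + 1)) := by
          field_simp
        rw [this]
        exact mul_lt_of_lt_one_right hε ((div_lt_one (by positivity)).2 (by linarith))
end
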